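/- Let K be a finite n-dimensional simplicial complex embedded in Euclidean space, let L be a subdivision of K, and let ν^i be an i-simplex of L whose open simplex is contained in the open r-simplex μ^r of K. Then the stratification rank and the generalized angle defect are preserved: r_L(ν^i) = r_K(μ^r) and D_L(ν^i) = D_K(μ^r), where the left-hand sides are computed in L and the right-hand sides in K. -/

import Mathlib

open Filter MeasureTheory Geometry
open scoped BigOperators

noncomputable section

attribute [local instance 0] Classical.propDecidable

namespace AngleDefectPaper

/-- `N`-dimensional Euclidean space. -/
abbrev Euc (N : ℕ) : Type := EuclideanSpace ℝ (Fin N)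

variable {N : ℕ}

/-- The open simplex determined by a finite set of points: the intrinsic
(relative) interior of its convex hull. -/
def openSimplex (s : Finset (Euc N)) : Set (Euc N) :=
  intrinsicInterior ℝ (convexHull ℝ (s : Set (Euc N)))

/-- The normalized solid angle `α(η, σ)` of the simplex `σ` along its face `η`:
the fraction of a small sphere (in the affine span of `σ`) centered at a point of
the open face `η` that lies in `σ`, normalized so that the full sphere has
measure `1`.  It is computed as the limiting fraction of a small ambient ball
centered at the centroid of `η` that lies in the cylinder obtained by thickening
`σ` in the directions orthogonal to its affine span. -/
def solidAngle (η σ : Finset (Euc N)) : ℝ :=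
  limUnder (nhdsWithin (0 : ℝ) (Set.Ioi 0)) fun ε =>
    (volume (Metric.ball (η.centroid ℝ id) ε ∩
      {y : Euc N | ∃ c ∈ convexHull ℝ (σ : Set (Euc N)),
        ∃ w ∈ (vectorSpan ℝ (σ : Set (Euc N)))ᗮ, y = c + w})).toReal /
    (volume (Metric.ball (η.centroid ℝ id) ε)).toReal

/-- `Tcone r` is (a realization in the plane of) the open cone on `r` points:
`r` half-open segments emanating from the origin in pairwise distinct
directions, glued at the origin.  For `r = 0` it is a single point. -/
def Tcone (r : ℕ) : Set (ℝ × ℝ) :=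
  {0} ∪ ⋃ k ∈ Finset.range r,
    {p : ℝ × ℝ | ∃ t : ℝ, 0 ≤ t ∧ t < 1 ∧ p = t • ((1 : ℝ), (k : ℝ))}

/-- `x` has a neighborhood in `S` homeomorphic to `T_r × ℝ^{n-1}`, with the
homeomorphism taking `x` into the apex set `{cone point} × ℝ^{n-1}`. -/
def HasConeNbhd (n r : ℕ) (S : Set (Euc N)) (x : Euc N) : Prop :=
  ∃ U : Set (Euc N), U ∈ nhdsWithin x S ∧ U ⊆ S ∧
    ∃ h : U ≃ₜ (Tcone r) × EuclideanSpace ℝ (Fin (n - 1)),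
      ∀ hx : x ∈ U, ((h ⟨x, hx⟩).1 : ℝ × ℝ) = 0

/-- The set of points of `|K|` having a neighborhood of cone type `r`. -/
def csetAux (n : ℕ) (K : SimplicialComplex ℝ (Euc N)) (r : ℕ) : Set (Euc N) :=
  {x | x ∈ K.space ∧ HasConeNbhd n r K.space x}

/-- The sets `C_r(K)`: for `r ≠ 2` the points with a cone-type-`r` neighborhood,
and `C_2(K)` is the complement in `|K|` of the union of the others. -/
def cset (n : ℕ) (K : SimplicialComplex ℝ (Euc N)) (r : ℕ) : Set (Euc N) :=
  if r = 2 then K.space \ ⋃ r' ∈ {r' : ℕ | r' ≠ 2}, csetAux n K r'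
  else csetAux n K r

/-- The stratification rank `r(η) = r/2`, where `C_r(K)` is the (unique) set of
the stratification containing the open simplex of `η`. -/
def strRank (n : ℕ) (K : SimplicialComplex ℝ (Euc N)) (η : Finset (Euc N)) : ℝ :=
  if h : ∃ r : ℕ, r ≠ 2 ∧ openSimplex η ⊆ csetAux n K r then (h.choose : ℝ) / 2
  else 1

/-- The set of `n`-simplices of `K` having `η` as a face. -/
def nSimplicesOn (n : ℕ) (K : SimplicialComplex ℝ (Euc N)) (η : Finset (Euc N)) :
    Set (Finset (Euc N)) :=
  {σ | σ ∈ K.faces ∧ σ.card = n + 1 ∧ η ⊆ σ}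

/-- The generalized angle defect `D(η) = r(η) - Σ_{σⁿ ≻ η} α(η, σⁿ)`. -/
def defect (n : ℕ) (K : SimplicialComplex ℝ (Euc N)) (η : Finset (Euc N)) : ℝ :=
  strRank n K η - ∑ᶠ σ ∈ nSimplicesOn n K η, solidAngle η σ

/-- The angle defect sequence `a_m = 4 B_{m+2} (2^{m+2} - 1)/(m+2)`, where `B_k`
is the `k`-th Bernoulli number (with the convention `B_1 = -1/2`). -/
def ads (m : ℕ) : ℚ :=
  4 * bernoulli (m + 2) * (2 ^ (m + 2) - 1) / (m + 2)

/-- The ascending stratified curvature of a simplex `τ` (of dimension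
`p = τ.card - 1`) in the `n`-dimensional complex `K`. -/
def asc (n : ℕ) (K : SimplicialComplex ℝ (Euc N)) (τ : Finset (Euc N)) : ℝ :=
  (ads (τ.card - 1) : ℝ) * defect n K τ +
    (ads (τ.card - 1) : ℝ) / 2 *
      ∑ i ∈ Finset.Icc τ.card n,
        (-1 : ℝ) ^ (i - (τ.card - 1)) *
          ∑ᶠ η ∈ {η : Finset (Euc N) | η ∈ K.faces ∧ η.card = i + 1 ∧ τ ⊆ η},
            defect n K η

/-- The stratified Euler characteristic `χˢ(K) = Σ_{η ∈ K} r(η) (-1)^{dim η}`. -/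
def stratEuler (n : ℕ) (K : SimplicialComplex ℝ (Euc N)) : ℝ :=
  ∑ᶠ η ∈ K.faces, strRank n K η * (-1 : ℝ) ^ (η.card - 1)

/-- `fcount F k` is the number of `k`-dimensional simplices in `F`. -/
def fcount (F : Set (Finset (Euc N))) (k : ℕ) : ℕ :=
  {s ∈ F | s.card = k + 1}.ncard

/-- The combinatorial Euler characteristic `χ(F) = Σ_k (-1)^k f_k(F)`. -/
def eulerChar (F : Set (Finset (Euc N))) : ℤ :=
  ∑ᶠ k : ℕ, (-1 : ℤ) ^ k * fcount F k

/-- The link of `η` in `K`: all simplices `ω` of `K` disjoint from `η` such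
that the join `η ∗ ω` is a simplex of `K`. -/
def linkFaces (K : SimplicialComplex ℝ (Euc N)) (η : Finset (Euc N)) :
    Set (Finset (Euc N)) :=
  {ω | ω ∈ K.faces ∧ Disjoint η ω ∧ η ∪ ω ∈ K.faces}

/-- `K` is an `n`-dimensional simplicial complex. -/
def IsNDim (n : ℕ) (K : SimplicialComplex ℝ (Euc N)) : Prop :=
  (∀ s ∈ K.faces, s.card ≤ n + 1) ∧ ∃ s ∈ K.faces, s.card = n + 1

/-- `L` is a subdivision of `K`: same underlying space, and every open simplex
of `L` is contained in an open simplex of `K`. -/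
def IsSubdivision (K L : SimplicialComplex ℝ (Euc N)) : Prop :=
  L.space = K.space ∧ ∀ s ∈ L.faces, ∃ t ∈ K.faces, openSimplex s ⊆ openSimplex t

/-!
The rank and the defect only depend on the germ of `|K|` at a point of the open simplex. Near two
points of the same open simplex the polyhedron is one and the same union of tangent cones, so all
points of the open simplex have the same cone type and the same solid angles. The rank is therefore
read off at a single point of `ν ⊆ μ`, and there it sees nothing but `|L| = |K|`. Near that point
each `n`-simplex `τ` around `μ` is the union of the `n`-simplices of `L` around `ν` whose interior
lies in that of `τ`, up to lower-dimensional simplices; these do not contribute to the volume of the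
cylinders defining the angles, so the solid angles add up.
-/

section BarycentricCoordinates

universe u

variable {ι : Type*} {E : Type u} [NormedAddCommGroup E] [NormedSpace ℝ E]

theorem mem_intrinsicInterior_iff_mem_nhdsWithin {s : Set E} {p : E} :
    p ∈ intrinsicInterior ℝ s ↔ p ∈ affineSpan ℝ s ∧ s ∈ nhdsWithin p (affineSpan ℝ s) := by
  simp only [mem_intrinsicInterior, mem_interior_iff_mem_nhds]
  constructor
  · rintro ⟨y, hy, rfl⟩
    exact ⟨y.2, preimage_coe_mem_nhds_subtype.1 hy⟩
  · rintro ⟨hp, hs⟩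
    exact ⟨⟨p, hp⟩, preimage_coe_mem_nhds_subtype.2 hs, rfl⟩

/-- The simplex spanned by those vertices of an affine basis whose index lies in `S`. Writing the
faces of a simplex in this form turns membership questions into sign conditions on barycentric
coordinates of the ambient space. -/
def basisFace (b : AffineBasis ι ℝ E) (S : Finset ι) : Finset E :=
  S.map ⟨b, b.ind.injective⟩

variable (b : AffineBasis ι ℝ E) {S : Finset ι} {p : E}

theorem coe_basisFace : (basisFace b S : Set E) = b '' S := Finset.coe_map _ _

theorem basisFace_subset_basisFace_iff {T : Finset ι} :
    basisFace b S ⊆ basisFace b T ↔ S ⊆ T :=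
  Finset.map_subset_map

variable [Finite ι]

theorem mem_affineSpan_basisFace_iff :
    p ∈ affineSpan ℝ (basisFace b S : Set E) ↔ ∀ i ∉ S, b.coord i p = 0 := by
  cases nonempty_fintype ι
  rw [coe_basisFace]
  constructor
  · intro hp i hi
    obtain ⟨t, w, htS, hw, rfl⟩ := eq_affineCombination_of_mem_affineSpan_image hp
    exact b.coord_apply_combination_of_notMem (fun hit => hi (htS hit)) hw
  · intro hp
    have hsum : ∑ i ∈ S, b.coord i p = 1 := by
      rw [← b.sum_coord_apply_eq_one p]
      exact Finset.sum_subset (Finset.subset_univ S) fun i _ hi => hp i hi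
    have hcomb : S.affineCombination ℝ b (fun i => b.coord i p) = p := by
      conv_rhs => rw [← b.affineCombination_coord_eq_self p]
      rw [Finset.affineCombination_eq_linear_combination _ _ _ hsum,
        Finset.affineCombination_eq_linear_combination _ _ _ (b.sum_coord_apply_eq_one p)]
      exact Finset.sum_subset (Finset.subset_univ S) fun i _ hi => by rw [hp i hi, zero_smul]
    rw [← hcomb]
    exact affineCombination_mem_affineSpan_image hsum (fun i hi hiS => (hiS hi).elim) b

theorem mem_convexHull_basisFace_iff :
    p ∈ convexHull ℝ (basisFace b S : Set E) ↔
      (∀ i, 0 ≤ b.coord i p) ∧ ∀ i ∉ S, b.coord i p = 0 := by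
  cases nonempty_fintype ι
  constructor
  · refine fun hp => ⟨?_, (mem_affineSpan_basisFace_iff b).1 (convexHull_subset_affineSpan _ hp)⟩
    have hrange : p ∈ convexHull ℝ (Set.range b) :=
      convexHull_mono (by rw [coe_basisFace]; exact Set.image_subset_range b S) hp
    rwa [b.convexHull_eq_nonneg_coord] at hrange
  · rintro ⟨hnonneg, hzero⟩
    have hsub : ∀ f : ι → E, ∑ i ∈ S, b.coord i p • f i = ∑ i, b.coord i p • f i := fun f =>
      Finset.sum_subset (Finset.subset_univ S) fun i _ hi => by rw [hzero i hi, zero_smul]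
    rw [← b.linear_combination_coord_eq_self p, ← hsub]
    refine (convex_convexHull ℝ _).sum_mem (fun i _ => hnonneg i) ?_ fun i hi =>
      subset_convexHull ℝ _ (Finset.mem_map_of_mem _ hi)
    rw [← b.sum_coord_apply_eq_one p]
    exact Finset.sum_subset (Finset.subset_univ S) fun i _ hi => hzero i hi

theorem mem_intrinsicInterior_basisFace_iff :
    p ∈ intrinsicInterior ℝ (convexHull ℝ (basisFace b S : Set E)) ↔
      (∀ i ∈ S, 0 < b.coord i p) ∧ ∀ i ∉ S, b.coord i p = 0 := by
  rw [mem_intrinsicInterior_iff_mem_nhdsWithin, affineSpan_convexHull,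
    mem_affineSpan_basisFace_iff, and_comm]
  have := b.finiteDimensional
  refine and_congr_left fun hzero => ⟨fun hnhds i hi => ?_, fun hpos => ?_⟩
  -- Moving slightly away from the vertex `b i` would make a vanishing coordinate negative.
  · have hp : p ∈ convexHull ℝ (basisFace b S : Set E) :=
      mem_of_mem_nhdsWithin ((mem_affineSpan_basisFace_iff b).2 hzero) hnhds
    refine lt_of_le_of_ne (((mem_convexHull_basisFace_iff b).1 hp).1 i) fun hi0 => ?_
    have hline : Tendsto (fun e : ℝ => AffineMap.lineMap p (b i) e) (nhds 0)
        (nhdsWithin p (affineSpan ℝ (basisFace b S : Set E))) := by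
      refine tendsto_nhdsWithin_iff.2 ⟨?_, Eventually.of_forall fun e => ?_⟩
      · simpa using (AffineMap.lineMap_continuous (p := p) (q := b i)).tendsto (0 : ℝ)
      · exact AffineMap.lineMap_mem e ((mem_affineSpan_basisFace_iff b).2 hzero)
          (subset_affineSpan ℝ _ (Finset.mem_map_of_mem _ hi))
    obtain ⟨e, he, hneg⟩ := ((hline.mono_left (nhdsWithin_le_nhds (s := Set.Iio 0))).eventually
      hnhds |>.and self_mem_nhdsWithin).exists
    have hcoord := ((mem_convexHull_basisFace_iff b).1 he).1 i
    rw [AffineMap.apply_lineMap, ← hi0, b.coord_apply_eq, AffineMap.lineMap_apply] at hcoord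
    simp only [vsub_eq_sub, sub_zero, smul_eq_mul, mul_one, vadd_eq_add, add_zero] at hcoord
    exact hcoord.not_gt hneg
  · have hev : ∀ᶠ q in nhds p, ∀ i ∈ S, 0 < b.coord i q :=
      (Filter.eventually_all_finset S).2 fun i hi =>
        (continuous_barycentric_coord b i).continuousAt.eventually (lt_mem_nhds (hpos i hi))
    filter_upwards [nhdsWithin_le_nhds hev, self_mem_nhdsWithin] with q hq hqspan
    have hq0 := (mem_affineSpan_basisFace_iff b).1 hqspan
    refine (mem_convexHull_basisFace_iff b).2 ⟨fun i => ?_, hq0⟩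
    by_cases hi : i ∈ S
    exacts [(hq i hi).le, (hq0 i hi).ge]

theorem exists_affineBasis_forall_subset_eq_basisFace [FiniteDimensional ℝ E] {t : Finset E}
    (ht : AffineIndependent ℝ ((↑) : t → E)) :
    ∃ (ι : Type u) (_ : Finite ι) (b : AffineBasis ι ℝ E),
      ∀ s ⊆ t, ∃ S : Finset ι, basisFace b S = s := by
  obtain ⟨u, htu, hu, htop⟩ := exists_subset_affineIndependent_affineSpan_eq_top
    (k := ℝ) (s := (t : Set E)) ht
  let b : AffineBasis u ℝ E := ⟨(↑), hu, by simpa using htop⟩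
  refine ⟨u, b.finite, b, fun s hst => ⟨s.subtype (· ∈ u), ?_⟩⟩
  exact Finset.subtype_map_of_mem fun x hx => htu (hst hx)

end BarycentricCoordinates

section OpenSimplex

variable {s t : Finset (Euc N)} {x y : Euc N}

theorem openSimplex_subset_convexHull : openSimplex s ⊆ convexHull ℝ (s : Set (Euc N)) :=
  intrinsicInterior_subset

theorem isClosed_convexHull_finset (s : Finset (Euc N)) :
    IsClosed (convexHull ℝ (s : Set (Euc N))) :=
  (s.finite_toSet.isCompact_convexHull ℝ).isClosed

theorem openSegment_subset_openSimplex (hs : AffineIndependent ℝ ((↑) : s → Euc N))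
    (hx : x ∈ openSimplex s) (hy : y ∈ convexHull ℝ (s : Set (Euc N))) :
    openSegment ℝ x y ⊆ openSimplex s := by
  obtain ⟨ι, _, b, hb⟩ := exists_affineBasis_forall_subset_eq_basisFace hs
  obtain ⟨S, rfl⟩ := hb s subset_rfl
  rw [openSimplex, mem_intrinsicInterior_basisFace_iff] at hx
  rw [mem_convexHull_basisFace_iff] at hy
  rintro _ ⟨c, d, hc, hd, hcd, rfl⟩
  rw [openSimplex, mem_intrinsicInterior_basisFace_iff]
  have hcoord : ∀ i, b.coord i (c • x + d • y) = c * b.coord i x + d * b.coord i y := fun i =>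
    Convex.combo_affine_apply hcd
  refine ⟨fun i hi => ?_, fun i hi => ?_⟩
  · rw [hcoord]
    exact add_pos_of_pos_of_nonneg (mul_pos hc (hx.1 i hi)) (mul_nonneg hd.le (hy.1 i))
  · rw [hcoord, hx.2 i hi, hy.2 i hi, mul_zero, mul_zero, add_zero]

theorem centroid_mem_openSimplex (hs : AffineIndependent ℝ ((↑) : s → Euc N))
    (hne : s.Nonempty) : s.centroid ℝ id ∈ openSimplex s := by
  obtain ⟨ι, _, b, hb⟩ := exists_affineBasis_forall_subset_eq_basisFace hs
  obtain ⟨S, rfl⟩ := hb s subset_rfl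
  have hS : S.Nonempty := Finset.map_nonempty.1 hne
  have hsum := S.sum_centroidWeights_eq_one_of_nonempty ℝ hS
  rw [openSimplex, mem_intrinsicInterior_basisFace_iff, basisFace, Finset.centroid_map,
    Finset.centroid_def]
  refine ⟨fun i hi => ?_, fun i hi => b.coord_apply_combination_of_notMem hi hsum⟩
  have hpos : (0 : ℝ) < S.card := by exact_mod_cast hS.card_pos
  refine (inv_pos.2 hpos).trans_eq (b.coord_apply_combination_of_mem hi hsum).symm

theorem convexHull_subset_closure_openSimplex (hs : AffineIndependent ℝ ((↑) : s → Euc N)) :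
    convexHull ℝ (s : Set (Euc N)) ⊆ closure (openSimplex s) := by
  intro y hy
  have hne : s.Nonempty := by simpa using convexHull_nonempty_iff.1 ⟨y, hy⟩
  refine closure_mono (openSegment_subset_openSimplex hs (centroid_mem_openSimplex hs hne) hy) ?_
  rw [closure_openSegment]
  exact right_mem_segment ℝ _ y

theorem convexHull_subset_of_openSimplex_subset (hs : AffineIndependent ℝ ((↑) : s → Euc N))
    (hst : openSimplex s ⊆ openSimplex t) :
    convexHull ℝ (s : Set (Euc N)) ⊆ convexHull ℝ (t : Set (Euc N)) :=
  (convexHull_subset_closure_openSimplex hs).trans <|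
    closure_minimal (hst.trans openSimplex_subset_convexHull) (isClosed_convexHull_finset t)

theorem subset_of_mem_openSimplex_of_subset (ht : AffineIndependent ℝ ((↑) : t → Euc N))
    (hst : s ⊆ t) (hxt : x ∈ openSimplex t) (hxs : x ∈ convexHull ℝ (s : Set (Euc N))) :
    t ⊆ s := by
  obtain ⟨ι, _, b, hb⟩ := exists_affineBasis_forall_subset_eq_basisFace ht
  obtain ⟨S, rfl⟩ := hb s hst
  obtain ⟨T, rfl⟩ := hb t subset_rfl
  rw [openSimplex, mem_intrinsicInterior_basisFace_iff] at hxt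
  rw [mem_convexHull_basisFace_iff] at hxs
  refine (basisFace_subset_basisFace_iff b).2 fun i hi => ?_
  by_contra hiS
  exact (hxt.1 i hi).ne' (hxs.2 i hiS)

theorem exists_subset_mem_openSimplex (ht : AffineIndependent ℝ ((↑) : t → Euc N))
    (hx : x ∈ convexHull ℝ (t : Set (Euc N))) : ∃ s ⊆ t, x ∈ openSimplex s := by
  obtain ⟨ι, _, b, hb⟩ := exists_affineBasis_forall_subset_eq_basisFace ht
  obtain ⟨T, rfl⟩ := hb t subset_rfl
  rw [mem_convexHull_basisFace_iff] at hx
  have hmem : ∀ i, i ∈ T.filter (fun i => 0 < b.coord i x) ↔ 0 < b.coord i x := fun i =>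
    Finset.mem_filter.trans (and_iff_right_of_imp fun hi => by
      by_contra hiT
      exact hi.ne' (hx.2 i hiT))
  refine ⟨basisFace b (T.filter fun i => 0 < b.coord i x),
    (basisFace_subset_basisFace_iff b).2 (Finset.filter_subset _ T), ?_⟩
  rw [openSimplex, mem_intrinsicInterior_basisFace_iff]
  exact ⟨fun i hi => (hmem i).1 hi, fun i hi =>
    le_antisymm (not_lt.1 fun h => hi ((hmem i).2 h)) (hx.1 i)⟩

theorem nonempty_of_mem_openSimplex (hx : x ∈ openSimplex s) : s.Nonempty := by
  simpa using convexHull_nonempty_iff.1 ⟨x, openSimplex_subset_convexHull hx⟩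

theorem card_le_card_of_convexHull_subset (hs : AffineIndependent ℝ ((↑) : s → Euc N))
    (hst : convexHull ℝ (s : Set (Euc N)) ⊆ convexHull ℝ (t : Set (Euc N))) :
    s.card ≤ t.card :=
  hs.card_le_card_of_subset_affineSpan <|
    (subset_convexHull ℝ _).trans (hst.trans (convexHull_subset_affineSpan _))

end OpenSimplex

section Incidence

variable {K : SimplicialComplex ℝ (Euc N)} {s t : Finset (Euc N)} {x : Euc N}

theorem subset_of_mem_openSimplex (hs : s ∈ K.faces) (ht : t ∈ K.faces) (hxs : x ∈ openSimplex s)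
    (hxt : x ∈ convexHull ℝ (t : Set (Euc N))) : s ⊆ t := by
  have hx : x ∈ convexHull ℝ ((s ∩ t : Finset (Euc N)) : Set (Euc N)) := by
    rw [Finset.coe_inter]
    exact K.inter_subset_convexHull hs ht ⟨openSimplex_subset_convexHull hxs, hxt⟩
  exact (subset_of_mem_openSimplex_of_subset (K.indep hs) Finset.inter_subset_left hxs hx).trans
    Finset.inter_subset_right

theorem eq_of_mem_openSimplex (hs : s ∈ K.faces) (ht : t ∈ K.faces) (hxs : x ∈ openSimplex s)
    (hxt : x ∈ openSimplex t) : s = t :=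
  (subset_of_mem_openSimplex hs ht hxs (openSimplex_subset_convexHull hxt)).antisymm
    (subset_of_mem_openSimplex ht hs hxt (openSimplex_subset_convexHull hxs))

theorem exists_face_mem_openSimplex (ht : t ∈ K.faces)
    (hx : x ∈ convexHull ℝ (t : Set (Euc N))) : ∃ s ∈ K.faces, s ⊆ t ∧ x ∈ openSimplex s := by
  obtain ⟨s, hst, hxs⟩ := exists_subset_mem_openSimplex (K.indep ht) hx
  exact ⟨s, K.down_closed ht hst (nonempty_of_mem_openSimplex hxs), hst, hxs⟩

theorem eventually_subset_of_mem_convexHull (hK : K.faces.Finite) (hs : s ∈ K.faces)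
    (hx : x ∈ openSimplex s) :
    ∀ᶠ p in nhds x, ∀ t ∈ K.faces, p ∈ convexHull ℝ (t : Set (Euc N)) → s ⊆ t := by
  refine (eventually_all_finite hK).2 fun t ht => ?_
  by_cases hxt : x ∈ convexHull ℝ (t : Set (Euc N))
  · exact Eventually.of_forall fun _ _ => subset_of_mem_openSimplex hs ht hx hxt
  · filter_upwards [(isClosed_convexHull_finset t).isOpen_compl.mem_nhds hxt] with p hp hpt
    exact absurd hpt hp

end Incidence

section FaceCone

variable {s t : Finset (Euc N)} {x y v : Euc N}

/-- The tangent cone of the simplex `t` along its face `s`: the directions pointing from some point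
of the open simplex `s` into `t`. It describes the germ of `t` at every point of the open face,
which is why both the local topology and the solid angle are constant along `s`. -/
def faceCone (s t : Finset (Euc N)) : Set (Euc N) :=
  {v | ∃ x ∈ openSimplex s, ∃ e : ℝ, 0 < e ∧ x + e • v ∈ convexHull ℝ (t : Set (Euc N))}

theorem smul_mem_faceCone_iff {e : ℝ} (he : 0 < e) : e • v ∈ faceCone s t ↔ v ∈ faceCone s t := by
  constructor
  · rintro ⟨x, hx, d, hd, hmem⟩
    exact ⟨x, hx, d * e, mul_pos hd he, by rwa [mul_smul]⟩
  · rintro ⟨x, hx, d, hd, hmem⟩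
    exact ⟨x, hx, d / e, div_pos hd he, by rwa [smul_smul, div_mul_cancel₀ d he.ne']⟩

theorem eventually_add_mem_convexHull_iff (ht : AffineIndependent ℝ ((↑) : t → Euc N))
    (hst : s ⊆ t) (hx : x ∈ openSimplex s) :
    ∀ᶠ v in nhds (0 : Euc N), x + v ∈ convexHull ℝ (t : Set (Euc N)) ↔ v ∈ faceCone s t := by
  obtain ⟨ι, _, b, hb⟩ := exists_affineBasis_forall_subset_eq_basisFace ht
  obtain ⟨S, rfl⟩ := hb s hst
  obtain ⟨T, rfl⟩ := hb t subset_rfl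
  have hadd : ∀ i p v, b.coord i (p + v) = (b.coord i).linear v + b.coord i p := fun i p v => by
    rw [add_comm p v]
    exact (b.coord i).map_vadd p v
  have hx' := (mem_intrinsicInterior_basisFace_iff b).1 hx
  have hpos : ∀ᶠ v in nhds (0 : Euc N), ∀ i ∈ S, 0 < b.coord i (x + v) :=
    (Filter.eventually_all_finset S).2 fun i hi =>
      ((continuous_barycentric_coord b i).comp (continuous_const_add x)).continuousAt.eventually
        (lt_mem_nhds (by simpa using hx'.1 i hi))
  filter_upwards [hpos] with v hv
  refine ⟨fun hmem => ⟨x, hx, 1, one_pos, by rwa [one_smul]⟩, ?_⟩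
  rintro ⟨y, hy, e, he, hmem⟩
  have hy' := (mem_intrinsicInterior_basisFace_iff b).1 hy
  have hcoord : ∀ i ∉ S, b.coord i (y + e • v) = e * b.coord i (x + v) := fun i hi => by
    rw [hadd, hadd, hy'.2 i hi, hx'.2 i hi, map_smul, smul_eq_mul, add_zero, add_zero]
  rw [mem_convexHull_basisFace_iff] at hmem ⊢
  refine ⟨fun i => ?_, fun i hi => ?_⟩
  · by_cases hiS : i ∈ S
    · exact (hv i hiS).le
    · exact nonneg_of_mul_nonneg_right (hcoord i hiS ▸ hmem.1 i) he
  · have hiS : i ∉ S := fun h => hi ((basisFace_subset_basisFace_iff b).1 hst h)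
    exact (mul_eq_zero.1 (hcoord i hiS ▸ hmem.2 i hi)).resolve_left he.ne'

theorem eventually_add_mem_space_iff {K : SimplicialComplex ℝ (Euc N)} (hK : K.faces.Finite)
    (hs : s ∈ K.faces) (hx : x ∈ openSimplex s) :
    ∀ᶠ v in nhds (0 : Euc N), x + v ∈ K.space ↔ ∃ t ∈ K.faces, s ⊆ t ∧ v ∈ faceCone s t := by
  have htendsto : Tendsto (fun v => x + v) (nhds 0) (nhds x) := by
    simpa using (continuous_const_add x).tendsto 0
  have hstar := htendsto.eventually (eventually_subset_of_mem_convexHull hK hs hx)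
  have hcone : ∀ᶠ v in nhds (0 : Euc N), ∀ t ∈ K.faces, s ⊆ t →
      (x + v ∈ convexHull ℝ (t : Set (Euc N)) ↔ v ∈ faceCone s t) :=
    (eventually_all_finite hK).2 fun t ht => eventually_imp_distrib_left.2 fun hst =>
      eventually_add_mem_convexHull_iff (K.indep ht) hst hx
  filter_upwards [hstar, hcone] with v hv hv'
  rw [SimplicialComplex.mem_space_iff]
  constructor
  · rintro ⟨t, ht, hmem⟩
    exact ⟨t, ht, hv t ht hmem, (hv' t ht (hv t ht hmem)).1 hmem⟩
  · rintro ⟨t, ht, hst, hmem⟩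
    exact ⟨t, ht, (hv' t ht hst).2 hmem⟩

theorem eventually_mem_space_iff_add_mem_space {K : SimplicialComplex ℝ (Euc N)}
    (hK : K.faces.Finite) (hs : s ∈ K.faces) (hx : x ∈ openSimplex s) (hy : y ∈ openSimplex s) :
    ∀ᶠ p in nhds x, p ∈ K.space ↔ p + (y - x) ∈ K.space := by
  have htendsto : Tendsto (fun p => p - x) (nhds x) (nhds 0) := by
    simpa using (continuous_sub_right x).tendsto x
  filter_upwards [htendsto.eventually (eventually_add_mem_space_iff hK hs hx),
    htendsto.eventually (eventually_add_mem_space_iff hK hs hy)] with p hpx hpy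
  rw [add_sub_cancel] at hpx
  rw [hpx, ← hpy, ← add_sub_assoc, ← add_sub_assoc, add_comm]

end FaceCone

section SelfSimilar

variable {X Y : Type*} [TopologicalSpace X] [TopologicalSpace Y] {a : X}

/-- Arbitrarily small neighborhoods of `a` contain an open copy of the whole space in which `a`
keeps its place. This is what allows a cone neighborhood to be shrunk. -/
def IsSelfSimilarAt (a : X) : Prop :=
  ∀ W ∈ nhds a, ∃ φ : X → X, Topology.IsOpenEmbedding φ ∧ φ a = a ∧ Set.range φ ⊆ W

theorem IsSelfSimilarAt.prod {b : Y} (ha : IsSelfSimilarAt a) (hb : IsSelfSimilarAt b) :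
    IsSelfSimilarAt (a, b) := by
  intro W hW
  obtain ⟨A, hA, B, hB, hAB⟩ := mem_nhds_prod_iff.1 hW
  obtain ⟨φ, hφ, hφa, hφA⟩ := ha A hA
  obtain ⟨ψ, hψ, hψb, hψB⟩ := hb B hB
  refine ⟨Prod.map φ ψ, hφ.prodMap hψ, Prod.ext hφa hψb, ?_⟩
  rw [Set.range_prodMap]
  exact (Set.prod_mono hφA hψB).trans hAB

theorem IsSelfSimilarAt.homeomorph (ha : IsSelfSimilarAt a) (h : X ≃ₜ Y) :
    IsSelfSimilarAt (h a) := by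
  intro W hW
  obtain ⟨φ, hφ, hφa, hφW⟩ := ha (h ⁻¹' W) (h.continuous.continuousAt.preimage_mem_nhds hW)
  refine ⟨h ∘ φ ∘ h.symm, h.isOpenEmbedding.comp (hφ.comp h.symm.isOpenEmbedding), ?_, ?_⟩
  · simp only [Function.comp_apply, Homeomorph.symm_apply_apply, hφa]
  · rintro _ ⟨y, rfl⟩
    exact hφW ⟨h.symm y, rfl⟩

theorem isSelfSimilarAt_of_normedSpace {E : Type*} [NormedAddCommGroup E] [NormedSpace ℝ E]
    (a : E) : IsSelfSimilarAt a := by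
  intro W hW
  obtain ⟨d, hd, hball⟩ := Metric.mem_nhds_iff.1 hW
  let ψ := OpenPartialHomeomorph.univBall a d
  have hψ : ψ.source = Set.univ := OpenPartialHomeomorph.univBall_source a d
  refine ⟨ψ ∘ Homeomorph.subRight a,
    (ψ.isOpenEmbedding hψ).comp (Homeomorph.subRight a).isOpenEmbedding, ?_, ?_⟩
  · simp [ψ]
  · rintro _ ⟨y, rfl⟩
    refine hball ?_
    rw [← OpenPartialHomeomorph.univBall_target a hd]
    exact ψ.map_source (hψ ▸ Set.mem_univ _)

end SelfSimilar

section Tcone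

variable {r : ℕ} {p : ℝ × ℝ}

theorem mem_Tcone_iff :
    p ∈ Tcone r ↔ p = 0 ∨ ∃ k < r, 0 ≤ p.1 ∧ p.1 < 1 ∧ p.2 = p.1 * k := by
  simp only [Tcone, Set.mem_union, Set.mem_singleton_iff, Set.mem_iUnion, Finset.mem_range,
    Set.mem_ofPred_eq, exists_prop]
  refine or_congr_right (exists_congr fun k => and_congr_right fun _ => ?_)
  constructor
  · rintro ⟨t, ht0, ht1, rfl⟩
    simpa using ⟨ht0, ht1⟩
  · rintro ⟨h0, h1, h2⟩
    exact ⟨p.1, h0, h1, Prod.ext (by simp) (by simpa using h2)⟩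

theorem zero_mem_Tcone (r : ℕ) : (0 : ℝ × ℝ) ∈ Tcone r := mem_Tcone_iff.2 (Or.inl rfl)

theorem fst_lt_one_of_mem_Tcone (hp : p ∈ Tcone r) : p.1 < 1 := by
  obtain rfl | ⟨k, -, -, h, -⟩ := mem_Tcone_iff.1 hp
  exacts [zero_lt_one, h]

theorem norm_le_of_mem_Tcone (hp : p ∈ Tcone r) : ‖p‖ ≤ (r + 1) * p.1 := by
  obtain rfl | ⟨k, hk, h0, -, h2⟩ := mem_Tcone_iff.1 hp
  · simp
  · have hkr : (k : ℝ) ≤ r := by exact_mod_cast hk.le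
    rw [Prod.norm_def, h2, Real.norm_of_nonneg h0, Real.norm_of_nonneg (by positivity)]
    refine max_le ?_ ?_ <;> nlinarith [Nat.cast_nonneg (α := ℝ) r]

theorem smul_mem_Tcone {c : ℝ} (hc : 0 ≤ c) (hp : p ∈ Tcone r) (hcp : c * p.1 < 1) :
    c • p ∈ Tcone r := by
  obtain rfl | ⟨k, hk, h0, -, h2⟩ := mem_Tcone_iff.1 hp
  · rw [smul_zero]
    exact zero_mem_Tcone r
  · refine mem_Tcone_iff.2 (Or.inr ⟨k, hk, mul_nonneg hc h0, hcp, ?_⟩)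
    rw [Prod.smul_snd, Prod.smul_fst, h2, smul_eq_mul, smul_eq_mul, mul_assoc]

theorem isSelfSimilarAt_Tcone (r : ℕ) :
    IsSelfSimilarAt (⟨0, zero_mem_Tcone r⟩ : Tcone r) := by
  intro W hW
  obtain ⟨d, hd, hball⟩ := Metric.mem_nhds_iff.1 hW
  have hr : (0 : ℝ) < r + 1 := by positivity
  obtain ⟨e, he, hlt⟩ := exists_between (lt_min one_pos (div_pos hd hr))
  have hed : e < 1 ∧ e < d / (r + 1) := lt_min_iff.1 hlt
  have hscale : ∀ p : Tcone r, e • (p : ℝ × ℝ) ∈ Tcone r := fun p =>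
    smul_mem_Tcone he.le p.2 (mul_lt_one_of_nonneg_of_lt_one_left he.le hed.1
      (fst_lt_one_of_mem_Tcone p.2).le)
  have hrange : Set.range (fun p : Tcone r => (⟨e • (p : ℝ × ℝ), hscale p⟩ : Tcone r)) =
      {p : Tcone r | (p : ℝ × ℝ).1 < e} := by
    ext p
    constructor
    · rintro ⟨q, rfl⟩
      exact mul_lt_of_lt_one_right he (fst_lt_one_of_mem_Tcone q.2)
    · intro hp
      refine ⟨⟨e⁻¹ • (p : ℝ × ℝ), smul_mem_Tcone (inv_nonneg.2 he.le) p.2 ?_⟩, ?_⟩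
      · rwa [inv_mul_lt_iff₀ he, mul_one]
      · exact Subtype.ext (smul_inv_smul₀ he.ne' _)
  have hemb : Topology.IsEmbedding (fun p : Tcone r => e • (p : ℝ × ℝ)) :=
    (Homeomorph.smulOfNeZero e he.ne').isEmbedding.comp Topology.IsEmbedding.subtypeVal
  refine ⟨fun p => ⟨e • (p : ℝ × ℝ), hscale p⟩, ⟨.of_comp (hemb.continuous.subtype_mk _)
    continuous_subtype_val hemb, ?_⟩, Subtype.ext (smul_zero e), ?_⟩
  · rw [hrange]
    exact isOpen_lt (continuous_fst.comp continuous_subtype_val) continuous_const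
  · rw [hrange]
    intro p hp
    refine hball ?_
    rw [Metric.mem_ball, Subtype.dist_eq, dist_zero_right]
    calc ‖(p : ℝ × ℝ)‖ ≤ (r + 1) * (p : ℝ × ℝ).1 := norm_le_of_mem_Tcone p.2
      _ < (r + 1) * (d / (r + 1)) := by gcongr; exact lt_trans hp hed.2
      _ = d := mul_div_cancel₀ d hr.ne'

end Tcone

section ConeNeighborhood

variable {n r : ℕ} {S S' : Set (Euc N)} {x y : Euc N}

theorem HasConeNbhd.exists_subset (h : HasConeNbhd n r S x) (hx : x ∈ S) {V : Set (Euc N)}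
    (hV : V ∈ nhds x) :
    ∃ U ∈ nhdsWithin x S, U ⊆ S ∩ V ∧
      ∃ h : U ≃ₜ Tcone r × EuclideanSpace ℝ (Fin (n - 1)),
        ∀ hx : x ∈ U, ((h ⟨x, hx⟩).1 : ℝ × ℝ) = 0 := by
  obtain ⟨U, hU, hUS, h, hapex⟩ := h
  have hxU : x ∈ U := mem_of_mem_nhdsWithin hx hU
  have hself : IsSelfSimilarAt (⟨x, hxU⟩ : U) := by
    have hmodel := (isSelfSimilarAt_Tcone r).prod (isSelfSimilarAt_of_normedSpace (h ⟨x, hxU⟩).2)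
    have hpoint : ((⟨0, zero_mem_Tcone r⟩ : Tcone r), (h ⟨x, hxU⟩).2) = h ⟨x, hxU⟩ :=
      Prod.ext (Subtype.ext (hapex hxU).symm) rfl
    simpa only [hpoint, Homeomorph.symm_apply_apply] using hmodel.homeomorph h.symm
  obtain ⟨φ, hφ, hφx, hφV⟩ := hself _ (continuous_subtype_val.continuousAt.preimage_mem_nhds hV)
  have hemb : Topology.IsEmbedding (Subtype.val ∘ φ) :=
    Topology.IsEmbedding.subtypeVal.comp hφ.isEmbedding
  refine ⟨Set.range (Subtype.val ∘ φ), ?_, ?_, hemb.toHomeomorph.symm.trans h, fun hxφ => ?_⟩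
  · have hnhds : nhdsWithin x S = nhdsWithin x U :=
      (nhdsWithin_le_iff.2 hU).antisymm (nhdsWithin_mono x hUS)
    rw [hnhds, Set.range_comp, ← map_nhds_subtype_val ⟨x, hxU⟩]
    exact image_mem_map (hφ.isOpen_range.mem_nhds ⟨_, hφx⟩)
  · rintro _ ⟨u, rfl⟩
    exact ⟨hUS (φ u).2, hφV ⟨u, rfl⟩⟩
  · have hpre : hemb.toHomeomorph ⟨x, hxU⟩ = ⟨x, hxφ⟩ :=
      Subtype.ext (congrArg Subtype.val hφx : (φ ⟨x, hxU⟩ : Euc N) = x)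
    rw [Homeomorph.trans_apply, ← hpre, Homeomorph.symm_apply_apply]
    exact hapex hxU

theorem HasConeNbhd.of_homeomorph (h : HasConeNbhd n r S x) (hx : x ∈ S) (e : Euc N ≃ₜ Euc N)
    (he : ∀ᶠ p in nhds x, p ∈ S ↔ e p ∈ S') : HasConeNbhd n r S' (e x) := by
  obtain ⟨U, hU, hUS, h, hapex⟩ := h.exists_subset hx he
  have hxU : x ∈ U := mem_of_mem_nhdsWithin hx hU
  refine ⟨e '' U, ?_, ?_, (e.image U).symm.trans h, fun hex => ?_⟩
  · have hgerm : nhdsWithin x S = nhdsWithin x (e ⁻¹' S') :=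
      nhdsWithin_eq_iff_eventuallyEq.2 (he.mono fun p hp => propext hp)
    rw [← e.isOpenEmbedding.map_nhdsWithin_preimage_eq, ← hgerm]
    exact image_mem_map hU
  · rintro _ ⟨p, hp, rfl⟩
    exact (hUS hp).2.1 (hUS hp).1
  · have hpre : e.image U ⟨x, hxU⟩ = ⟨e x, hex⟩ := rfl
    rw [Homeomorph.trans_apply, ← hpre, Homeomorph.symm_apply_apply]
    exact hapex hxU

variable {K L : SimplicialComplex ℝ (Euc N)}

theorem mem_csetAux_of_mem_openSimplex (hK : K.faces.Finite) {s : Finset (Euc N)}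
    (hs : s ∈ K.faces) (hx : x ∈ openSimplex s) (hy : y ∈ openSimplex s)
    (h : x ∈ csetAux n K r) : y ∈ csetAux n K r := by
  refine ⟨SimplicialComplex.convexHull_subset_space hs (openSimplex_subset_convexHull hy), ?_⟩
  have hcone := h.2.of_homeomorph h.1 (Homeomorph.addRight (y - x))
    (eventually_mem_space_iff_add_mem_space hK hs hx hy)
  rwa [show Homeomorph.addRight (y - x) x = y from add_sub_cancel x y] at hcone

theorem strRank_eq_of_space_eq (hK : K.faces.Finite) (hspace : L.space = K.space)
    {ν μ : Finset (Euc N)} (hμ : μ ∈ K.faces) (hν : (openSimplex ν).Nonempty)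
    (hcont : openSimplex ν ⊆ openSimplex μ) : strRank n L ν = strRank n K μ := by
  obtain ⟨x, hx⟩ := hν
  have hiff : ∀ r, openSimplex ν ⊆ csetAux n L r ↔ openSimplex μ ⊆ csetAux n K r := fun r => by
    rw [show csetAux n L r = csetAux n K r by rw [csetAux, csetAux, hspace]]
    exact ⟨fun h y hy => mem_csetAux_of_mem_openSimplex hK hμ (hcont hx) hy (h hx), hcont.trans⟩
  simp only [strRank, hiff]

end ConeNeighborhood

section OrthogonalCylinder

open scoped Pointwise

variable {E : Type*} [NormedAddCommGroup E] [InnerProductSpace ℝ E] {V : Submodule ℝ E}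
  {A B : Set E} {x v : E}

/-- The cylinder over `A` in the directions orthogonal to `V`; it turns the solid angle of a
lower-dimensional simplex into a volume in the ambient space. -/
def orthogonalCylinder (V : Submodule ℝ E) (A : Set E) : Set E :=
  {y | ∃ c ∈ A, ∃ w ∈ Vᗮ, y = c + w}

theorem orthogonalCylinder_mono (h : A ⊆ B) : orthogonalCylinder V A ⊆ orthogonalCylinder V B :=
  fun _ ⟨c, hc, w, hw, hy⟩ => ⟨c, h hc, w, hw, hy⟩

theorem isClosed_orthogonalCylinder (hA : IsCompact A) : IsClosed (orthogonalCylinder V A) := by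
  have hadd : orthogonalCylinder V A = A + (Vᗮ : Set E) := by
    ext y
    simp only [orthogonalCylinder, Set.mem_ofPred_eq, Set.mem_add, SetLike.mem_coe, eq_comm]
  rw [hadd]
  exact V.isClosed_orthogonal.add_left_of_isCompact hA

theorem orthogonalCylinder_inter_subset (h : ∀ a ∈ A, ∀ b ∈ B, a - b ∈ V) :
    orthogonalCylinder V A ∩ orthogonalCylinder V B ⊆ orthogonalCylinder V (A ∩ B) := by
  rintro y ⟨⟨a, ha, w, hw, rfl⟩, b, hb, w', hw', hab⟩
  have horth : a - b = w' - w := by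
    rw [sub_eq_sub_iff_add_eq_add, hab, add_comm]
  have hzero : a - b = 0 := Submodule.disjoint_def.1 V.orthogonal_disjoint _ (h a ha b hb)
    (horth ▸ sub_mem hw' hw)
  exact ⟨a, ⟨ha, sub_eq_zero.1 hzero ▸ hb⟩, w, hw, rfl⟩

theorem mem_ball_of_add_orthogonal_mem_ball {c w : E} {ε : ℝ} (hc : c - x ∈ V) (hw : w ∈ Vᗮ)
    (h : c + w ∈ Metric.ball x ε) : c ∈ Metric.ball x ε := by
  rw [Metric.mem_ball, dist_eq_norm] at h ⊢
  refine lt_of_le_of_lt ?_ h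
  have hpyth := norm_add_sq_eq_norm_sq_add_norm_sq_of_inner_eq_zero (c - x) w
    (V.inner_right_of_mem_orthogonal hc hw)
  rw [sub_add_eq_add_sub] at hpyth
  nlinarith [norm_nonneg (c - x), norm_nonneg (c + w - x), mul_self_nonneg ‖w‖]

theorem add_mem_orthogonalCylinder_iff [V.HasOrthogonalProjection] (hA : ∀ a ∈ A, a - x ∈ V) :
    x + v ∈ orthogonalCylinder V A ↔ x + V.starProjection v ∈ A := by
  constructor
  · rintro ⟨c, hc, w, hw, h⟩
    have hproj : V.starProjection v = c - x := by
      refine Submodule.eq_starProjection_of_mem_orthogonal (hA c hc) ?_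
      rwa [sub_sub_eq_add_sub, add_comm v x, h, add_sub_cancel_left]
    rwa [hproj, add_sub_cancel]
  · intro h
    exact ⟨_, h, _, V.sub_starProjection_mem_orthogonal v, by abel⟩

theorem addHaar_orthogonalCylinder_affineSpan [FiniteDimensional ℝ E] [MeasurableSpace E]
    [BorelSpace E] (μ : Measure E) [μ.IsAddHaarMeasure] {s : Finset E}
    (hs : s.card ≤ Module.finrank ℝ V) :
    μ (orthogonalCylinder V (affineSpan ℝ (s : Set E))) = 0 := by
  rcases s.eq_empty_or_nonempty with rfl | ⟨p, hp⟩
  · simp [orthogonalCylinder]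
  set D := vectorSpan ℝ (s : Set E) with hD
  have hrank : Module.finrank ℝ D ≤ s.card - 1 := by
    have h := finrank_vectorSpan_image_finset_le ℝ (id : E → E) s
      (Nat.succ_pred_eq_of_pos (Finset.card_pos.2 ⟨p, hp⟩)).symm
    rwa [Finset.image_id] at h
  have hsub : orthogonalCylinder V (affineSpan ℝ (s : Set E)) ⊆
      (AffineSubspace.mk' p (D ⊔ Vᗮ) : Set E) := by
    rintro y ⟨c, hc, w, hw, rfl⟩
    rw [SetLike.mem_coe, AffineSubspace.mem_mk', vsub_eq_sub, add_sub_right_comm]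
    refine Submodule.add_mem_sup ?_ hw
    rw [hD, ← direction_affineSpan]
    exact AffineSubspace.vsub_mem_direction hc (subset_affineSpan _ _ hp)
  refine measure_mono_null hsub (Measure.addHaar_affineSubspace _ _ fun htop => ?_)
  have hsup : D ⊔ Vᗮ = ⊤ := by
    rw [← AffineSubspace.direction_mk' p (D ⊔ Vᗮ), htop, AffineSubspace.direction_top]
  have hle := Submodule.finrank_add_le_finrank_add_finrank D Vᗮ
  rw [hsup, finrank_top] at hle
  have hsum := V.finrank_add_finrank_orthogonal
  have hpos : 0 < s.card := Finset.card_pos.2 ⟨p, hp⟩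
  omega

end OrthogonalCylinder

section BallFraction

open scoped Pointwise

variable {E : Type*} [NormedAddCommGroup E] {A C : Set E} {x : E} {ε : ℝ}

theorem ball_inter_eq_vadd_smul [NormedSpace ℝ E]
    (hC : ∀ e : ℝ, 0 < e → ∀ v, e • v ∈ C ↔ v ∈ C) (hε : 0 < ε)
    (hA : ∀ v ∈ Metric.ball (0 : E) ε, x + v ∈ A ↔ v ∈ C) :
    Metric.ball x ε ∩ A = x +ᵥ ε • (Metric.ball (0 : E) 1 ∩ C) := by
  rw [Set.smul_set_inter₀ hε.ne', smul_unitBall_of_pos hε]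
  ext y
  rw [Set.mem_vadd_set_iff_neg_vadd_mem, vadd_eq_add, neg_add_eq_sub, Set.mem_inter_iff,
    Set.mem_inter_iff, Set.mem_smul_set_iff_inv_smul_mem₀ hε.ne', hC _ (inv_pos.2 hε),
    mem_ball_zero_iff, ← dist_eq_norm, ← Metric.mem_ball]
  refine and_congr_right fun hy => ?_
  rw [← hA (y - x) (by rwa [mem_ball_zero_iff, ← dist_eq_norm]), add_sub_cancel]

variable [MeasurableSpace E]

/-- The fraction of the ball of radius `ε` around `x` occupied by `A`. -/
def ballFraction (μ : Measure E) (A : Set E) (x : E) (ε : ℝ) : ℝ :=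
  μ.real (Metric.ball x ε ∩ A) / μ.real (Metric.ball x ε)

theorem ballFraction_eq_of_cone [NormedSpace ℝ E] [FiniteDimensional ℝ E] [BorelSpace E]
    (μ : Measure E) [μ.IsAddHaarMeasure] (hC : ∀ e : ℝ, 0 < e → ∀ v, e • v ∈ C ↔ v ∈ C)
    (hε : 0 < ε) (hA : ∀ v ∈ Metric.ball (0 : E) ε, x + v ∈ A ↔ v ∈ C) :
    ballFraction μ A x ε = ballFraction μ C 0 1 := by
  have hscale : ∀ S : Set E,
      μ.real (x +ᵥ ε • S) = ε ^ Module.finrank ℝ E * μ.real S := fun S => by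
    rw [Measure.real, measure_vadd, Measure.addHaar_smul, ENNReal.toReal_mul,
      ENNReal.toReal_ofReal (abs_nonneg _), abs_of_pos (pow_pos hε _), Measure.real]
  have hball : Metric.ball x ε = x +ᵥ ε • Metric.ball (0 : E) 1 := by
    rw [smul_unitBall_of_pos hε, Metric.vadd_ball, vadd_eq_add, add_zero]
  rw [ballFraction, ball_inter_eq_vadd_smul hC hε hA, hball, hscale, hscale, ballFraction,
    mul_div_mul_left _ _ (pow_pos hε _).ne']

end BallFraction

section SolidAngle

theorem sub_mem_vectorSpan_of_mem_convexHull {E : Type*} [AddCommGroup E] [Module ℝ E]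
    {s : Set E} {x y : E} (hx : x ∈ convexHull ℝ s) (hy : y ∈ convexHull ℝ s) :
    x - y ∈ vectorSpan ℝ s := by
  rw [← direction_affineSpan]
  exact AffineSubspace.vsub_mem_direction (convexHull_subset_affineSpan _ hx)
    (convexHull_subset_affineSpan _ hy)

/-- The cylinder over the simplex `σ` in the directions orthogonal to it, whose volume near a point
of a face measures the solid angle of `σ` there. -/
abbrev simplexCylinder (σ : Finset (Euc N)) : Set (Euc N) :=
  orthogonalCylinder (vectorSpan ℝ (σ : Set (Euc N))) (convexHull ℝ (σ : Set (Euc N)))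

variable {η σ : Finset (Euc N)} {x : Euc N}

theorem measurableSet_simplexCylinder (σ : Finset (Euc N)) : MeasurableSet (simplexCylinder σ) :=
  (isClosed_orthogonalCylinder (σ.finite_toSet.isCompact_convexHull ℝ)).measurableSet

theorem openSimplex_subset_convexHull_of_subset (h : η ⊆ σ) :
    openSimplex η ⊆ convexHull ℝ (σ : Set (Euc N)) :=
  openSimplex_subset_convexHull.trans (convexHull_mono (Finset.coe_subset.2 h))

theorem eventually_add_mem_simplexCylinder_iff (hσ : AffineIndependent ℝ ((↑) : σ → Euc N))
    (hησ : η ⊆ σ) (hx : x ∈ openSimplex η) :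
    ∀ᶠ v in nhds (0 : Euc N), x + v ∈ simplexCylinder σ ↔
      (vectorSpan ℝ (σ : Set (Euc N))).starProjection v ∈ faceCone η σ := by
  set V := vectorSpan ℝ (σ : Set (Euc N))
  have htendsto : Tendsto V.starProjection (nhds 0) (nhds 0) := by
    simpa using V.starProjection.continuous.tendsto 0
  filter_upwards [htendsto.eventually (eventually_add_mem_convexHull_iff hσ hησ hx)] with v hv
  rw [← hv]
  exact add_mem_orthogonalCylinder_iff fun a ha => sub_mem_vectorSpan_of_mem_convexHull ha
    (openSimplex_subset_convexHull_of_subset hησ hx)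

theorem eventually_forall_mem_ball {X : Type*} [PseudoMetricSpace X] {p : X → Prop} {x : X}
    (h : ∀ᶠ y in nhds x, p y) :
    ∀ᶠ ε in nhdsWithin (0 : ℝ) (Set.Ioi 0), ∀ y ∈ Metric.ball x ε, p y := by
  obtain ⟨d, hd, hball⟩ := Metric.eventually_nhds_iff_ball.1 h
  filter_upwards [Ioo_mem_nhdsGT hd] with ε hε y hy
  exact hball y (Metric.ball_subset_ball hε.2.le hy)

theorem eventually_ballFraction_eq_solidAngle (hσ : AffineIndependent ℝ ((↑) : σ → Euc N))
    (hησ : η ⊆ σ) (hx : x ∈ openSimplex η) :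
    ∀ᶠ ε in nhdsWithin (0 : ℝ) (Set.Ioi 0),
      ballFraction volume (simplexCylinder σ) x ε = solidAngle η σ := by
  set V := vectorSpan ℝ (σ : Set (Euc N))
  have hcone : ∀ y ∈ openSimplex η, ∀ᶠ ε in nhdsWithin (0 : ℝ) (Set.Ioi 0),
      ballFraction volume (simplexCylinder σ) y ε =
        ballFraction volume (V.starProjection ⁻¹' faceCone η σ) 0 1 := fun y hy => by
    filter_upwards [eventually_forall_mem_ball (eventually_add_mem_simplexCylinder_iff hσ hησ hy),
      self_mem_nhdsWithin] with ε hε hpos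
    refine ballFraction_eq_of_cone volume (fun e he v => ?_) hpos hε
    rw [Set.mem_preimage, map_smul, smul_mem_faceCone_iff he, Set.mem_preimage]
  have hcentroid : η.centroid ℝ id ∈ openSimplex η :=
    centroid_mem_openSimplex (hσ.mono (Finset.coe_subset.2 hησ)) (nonempty_of_mem_openSimplex hx)
  have hangle : solidAngle η σ =
      ballFraction volume (V.starProjection ⁻¹' faceCone η σ) 0 1 :=
    Tendsto.limUnder_eq ((tendsto_congr' (hcone _ hcentroid)).2 tendsto_const_nhds)
  rw [hangle]
  exact hcone x hx

end SolidAngle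

section AngleSum

variable {n : ℕ} {K L : SimplicialComplex ℝ (Euc N)} {s ν μ σ τ : Finset (Euc N)} {x y : Euc N}
  {ε : ℝ}

theorem finrank_vectorSpan_add_one (hs : AffineIndependent ℝ ((↑) : s → Euc N))
    (hne : s.Nonempty) : Module.finrank ℝ (vectorSpan ℝ (s : Set (Euc N))) + 1 = s.card := by
  have := hne.to_subtype
  have hrank := hs.finrank_vectorSpan_add_one
  rwa [show Set.range ((↑) : s → Euc N) = s from Subtype.range_coe, Fintype.card_coe] at hrank

theorem vectorSpan_eq_of_convexHull_subset (hσ : AffineIndependent ℝ ((↑) : σ → Euc N))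
    (hτ : AffineIndependent ℝ ((↑) : τ → Euc N))
    (h : convexHull ℝ (σ : Set (Euc N)) ⊆ convexHull ℝ (τ : Set (Euc N)))
    (hcard : σ.card = τ.card) (hne : σ.Nonempty) :
    vectorSpan ℝ (σ : Set (Euc N)) = vectorSpan ℝ (τ : Set (Euc N)) := by
  refine Submodule.eq_of_le_of_finrank_eq ?_ ?_
  · rw [← direction_affineSpan, ← direction_affineSpan]
    exact AffineSubspace.direction_le <| affineSpan_le.2 <|
      (subset_convexHull ℝ _).trans (h.trans (convexHull_subset_affineSpan _))
  · have hτne : τ.Nonempty := Finset.card_pos.1 (hcard ▸ hne.card_pos)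
    have hrankσ := finrank_vectorSpan_add_one hσ hne
    have hrankτ := finrank_vectorSpan_add_one hτ hτne
    omega

theorem IsSubdivision.exists_mem_openSimplex (hsub : IsSubdivision K L) (hτ : τ ∈ K.faces)
    (hy : y ∈ convexHull ℝ (τ : Set (Euc N))) :
    ∃ σ ∈ L.faces, y ∈ openSimplex σ ∧
      (openSimplex σ ⊆ openSimplex τ ∨ σ.card < τ.card) := by
  have hyL : y ∈ L.space := hsub.1 ▸ SimplicialComplex.convexHull_subset_space hτ hy
  obtain ⟨ρ, hρ, hyρ⟩ := SimplicialComplex.mem_space_iff.1 hyL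
  obtain ⟨σ, hσ, -, hyσ⟩ := exists_face_mem_openSimplex hρ hyρ
  obtain ⟨τ', hτ', hστ'⟩ := hsub.2 σ hσ
  refine ⟨σ, hσ, hyσ, ?_⟩
  rcases (subset_of_mem_openSimplex hτ' hτ (hστ' hyσ) hy).eq_or_ssubset with rfl | hlt
  · exact Or.inl hστ'
  · exact Or.inr <| (card_le_card_of_convexHull_subset (L.indep hσ)
      (convexHull_subset_of_openSimplex_subset (L.indep hσ) hστ')).trans_lt
      (Finset.card_lt_card hlt)

/-- The `n`-simplices of `L` around `ν` into which a subdivision `L` cuts the simplex `τ`. -/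
def subcells (n : ℕ) (L : SimplicialComplex ℝ (Euc N)) (ν τ : Finset (Euc N)) :
    Set (Finset (Euc N)) :=
  {σ ∈ nSimplicesOn n L ν | openSimplex σ ⊆ openSimplex τ}

theorem finite_subcells (hL : L.faces.Finite) : (subcells n L ν τ).Finite :=
  hL.subset fun _ hσ => hσ.1.1

theorem convexHull_subset_of_mem_subcells (hσ : σ ∈ subcells n L ν τ) :
    convexHull ℝ (σ : Set (Euc N)) ⊆ convexHull ℝ (τ : Set (Euc N)) :=
  convexHull_subset_of_openSimplex_subset (L.indep hσ.1.1) hσ.2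

theorem simplexCylinder_eq_of_mem_subcells (hτ : AffineIndependent ℝ ((↑) : τ → Euc N))
    (hτn : τ.card = n + 1) (hσ : σ ∈ subcells n L ν τ) :
    simplexCylinder σ =
      orthogonalCylinder (vectorSpan ℝ (τ : Set (Euc N))) (convexHull ℝ (σ : Set (Euc N))) := by
  rw [simplexCylinder, vectorSpan_eq_of_convexHull_subset (L.indep hσ.1.1) hτ
    (convexHull_subset_of_mem_subcells hσ) (hσ.1.2.1.trans hτn.symm)
    (SimplicialComplex.nonempty_of_mem_faces hσ.1.1)]

theorem volume_orthogonalCylinder_affineSpan_of_card_lt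
    (hτ : AffineIndependent ℝ ((↑) : τ → Euc N)) (h : s.card < τ.card) :
    volume (orthogonalCylinder (vectorSpan ℝ (τ : Set (Euc N)))
      (affineSpan ℝ (s : Set (Euc N)))) = 0 := by
  have hrank := finrank_vectorSpan_add_one hτ (Finset.card_pos.1 (Nat.zero_lt_of_lt h))
  exact addHaar_orthogonalCylinder_affineSpan volume (by omega)

theorem pairwise_aedisjoint_simplexCylinder (hτ : AffineIndependent ℝ ((↑) : τ → Euc N))
    (hτn : τ.card = n + 1) :
    (subcells n L ν τ).Pairwise (Function.onFun (AEDisjoint volume) simplexCylinder) := by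
  intro σ₁ h₁ σ₂ h₂ hne
  have hcard : (σ₁ ∩ σ₂).card < τ.card := by
    rw [hτn, ← h₁.1.2.1]
    refine Finset.card_lt_card (Finset.inter_subset_left.ssubset_of_ne fun h => hne ?_)
    exact Finset.eq_of_subset_of_card_le (Finset.inter_eq_left.1 h)
      (h₂.1.2.1.trans h₁.1.2.1.symm).le
  refine measure_mono_null ?_ (volume_orthogonalCylinder_affineSpan_of_card_lt hτ hcard)
  rw [simplexCylinder_eq_of_mem_subcells hτ hτn h₁, simplexCylinder_eq_of_mem_subcells hτ hτn h₂]
  refine (orthogonalCylinder_inter_subset fun a ha b hb => ?_).trans (orthogonalCylinder_mono ?_)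
  · exact sub_mem_vectorSpan_of_mem_convexHull (convexHull_subset_of_mem_subcells h₁ ha)
      (convexHull_subset_of_mem_subcells h₂ hb)
  · rw [Finset.coe_inter]
    exact (L.inter_subset_convexHull h₁.1.1 h₂.1.1).trans (convexHull_subset_affineSpan _)

theorem simplexCylinder_subset_of_mem_subcells (hτ : AffineIndependent ℝ ((↑) : τ → Euc N))
    (hτn : τ.card = n + 1) (hσ : σ ∈ subcells n L ν τ) :
    simplexCylinder σ ⊆ simplexCylinder τ := by
  rw [simplexCylinder_eq_of_mem_subcells hτ hτn hσ]
  exact orthogonalCylinder_mono (convexHull_subset_of_mem_subcells hσ)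

theorem IsSubdivision.ball_inter_simplexCylinder_subset (hsub : IsSubdivision K L)
    (hτ : τ ∈ K.faces) (hτn : τ.card = n + 1) (hxτ : x ∈ convexHull ℝ (τ : Set (Euc N)))
    (hstar : ∀ y ∈ Metric.ball x ε, ∀ σ ∈ L.faces, y ∈ convexHull ℝ (σ : Set (Euc N)) → ν ⊆ σ) :
    Metric.ball x ε ∩ simplexCylinder τ ⊆ (⋃ σ ∈ subcells n L ν τ, simplexCylinder σ) ∪
      ⋃ σ ∈ {σ ∈ L.faces | σ.card < τ.card},
        orthogonalCylinder (vectorSpan ℝ (τ : Set (Euc N))) (affineSpan ℝ (σ : Set (Euc N))) := by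
  rintro _ ⟨hball, y, hy, w, hw, rfl⟩
  obtain ⟨σ, hσ, hyσ, hcases⟩ := hsub.exists_mem_openSimplex hτ hy
  have hyσ' := openSimplex_subset_convexHull hyσ
  rcases lt_or_ge σ.card τ.card with hlt | hge
  · exact Or.inr <| Set.mem_biUnion (x := σ) ⟨hσ, hlt⟩
      ⟨y, convexHull_subset_affineSpan _ hyσ', w, hw, rfl⟩
  · have hστ := hcases.resolve_right hge.not_gt
    have hcard := (card_le_card_of_convexHull_subset (L.indep hσ)
      (convexHull_subset_of_openSimplex_subset (L.indep hσ) hστ)).antisymm hge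
    have hy_ball := mem_ball_of_add_orthogonal_mem_ball
      (sub_mem_vectorSpan_of_mem_convexHull hy hxτ) hw hball
    have hσ_sub : σ ∈ subcells n L ν τ :=
      ⟨⟨hσ, hcard.trans hτn, hstar y hy_ball σ hσ hyσ'⟩, hστ⟩
    refine Or.inl <| Set.mem_biUnion hσ_sub ?_
    rw [simplexCylinder_eq_of_mem_subcells (K.indep hτ) hτn hσ_sub]
    exact ⟨y, hyσ', w, hw, rfl⟩

theorem IsSubdivision.ball_inter_simplexCylinder_ae_eq (hL : L.faces.Finite)
    (hsub : IsSubdivision K L) (hτ : τ ∈ K.faces) (hτn : τ.card = n + 1)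
    (hxτ : x ∈ convexHull ℝ (τ : Set (Euc N)))
    (hstar : ∀ y ∈ Metric.ball x ε, ∀ σ ∈ L.faces, y ∈ convexHull ℝ (σ : Set (Euc N)) → ν ⊆ σ) :
    (Metric.ball x ε ∩ simplexCylinder τ : Set (Euc N)) =ᵐ[volume]
      (⋃ σ ∈ subcells n L ν τ, Metric.ball x ε ∩ simplexCylinder σ : Set (Euc N)) := by
  rw [← Set.inter_iUnion₂]
  have hnull : volume (⋃ σ ∈ {σ ∈ L.faces | σ.card < τ.card},
      orthogonalCylinder (vectorSpan ℝ (τ : Set (Euc N))) (affineSpan ℝ (σ : Set (Euc N)))) = 0 :=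
    (measure_biUnion_null_iff (hL.subset (Set.sep_subset _ _)).countable).2 fun σ hσ =>
      volume_orthogonalCylinder_affineSpan_of_card_lt (K.indep hτ) hσ.2
  refine (ae_le_set.2 (measure_mono_null ?_ hnull)).antisymm ?_
  · rintro y ⟨hy, hy'⟩
    exact (hsub.ball_inter_simplexCylinder_subset hτ hτn hxτ hstar hy).resolve_left
      fun h => hy' ⟨hy.1, h⟩
  · exact (Set.inter_subset_inter_right _ <| Set.iUnion₂_subset fun σ hσ =>
      simplexCylinder_subset_of_mem_subcells (K.indep hτ) hτn hσ).eventuallyLE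

theorem IsSubdivision.eventually_ballFraction_eq_finsum (hL : L.faces.Finite)
    (hsub : IsSubdivision K L) (hν : ν ∈ L.faces) (hτ : τ ∈ K.faces) (hτn : τ.card = n + 1)
    (hx : x ∈ openSimplex ν) (hxτ : x ∈ convexHull ℝ (τ : Set (Euc N))) :
    ∀ᶠ ε in nhdsWithin (0 : ℝ) (Set.Ioi 0), ballFraction volume (simplexCylinder τ) x ε =
      ∑ᶠ σ ∈ subcells n L ν τ, ballFraction volume (simplexCylinder σ) x ε := by
  have hfin := finite_subcells (n := n) (ν := ν) (τ := τ) hL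
  filter_upwards [eventually_forall_mem_ball (eventually_subset_of_mem_convexHull hL hν hx)]
    with ε hstar
  have hdisj : (hfin.toFinset : Set (Finset (Euc N))).Pairwise
      (Function.onFun (AEDisjoint volume) fun σ => Metric.ball x ε ∩ simplexCylinder σ) := by
    rw [hfin.coe_toFinset]
    exact (pairwise_aedisjoint_simplexCylinder (K.indep hτ) hτn).mono' fun _ _ h =>
      h.mono Set.inter_subset_right Set.inter_subset_right
  rw [finsum_mem_eq_finite_toFinset_sum _ hfin]
  simp only [ballFraction]
  rw [← Finset.sum_div, ← measureReal_biUnion_finset₀ hdisj fun σ _ =>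
      (measurableSet_ball.inter (measurableSet_simplexCylinder σ)).nullMeasurableSet,
    measureReal_congr (hsub.ball_inter_simplexCylinder_ae_eq hL hτ hτn hxτ hstar)]
  simp only [hfin.mem_toFinset]

theorem IsSubdivision.solidAngle_eq_finsum_subcells (hL : L.faces.Finite)
    (hsub : IsSubdivision K L) (hν : ν ∈ L.faces) (hcont : openSimplex ν ⊆ openSimplex μ)
    (hτ : τ ∈ nSimplicesOn n K μ) :
    solidAngle μ τ = ∑ᶠ σ ∈ subcells n L ν τ, solidAngle ν σ := by
  obtain ⟨hτK, hτn, hμτ⟩ := hτ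
  have hx := centroid_mem_openSimplex (L.indep hν) (SimplicialComplex.nonempty_of_mem_faces hν)
  have hsum := hsub.eventually_ballFraction_eq_finsum hL hν hτK hτn hx
    (openSimplex_subset_convexHull_of_subset hμτ (hcont hx))
  have hτ_angle := eventually_ballFraction_eq_solidAngle (K.indep hτK) hμτ (hcont hx)
  have hσ_angle := (eventually_all_finite (finite_subcells (n := n) (ν := ν) (τ := τ) hL)).2
    fun σ hσ => eventually_ballFraction_eq_solidAngle (L.indep hσ.1.1) hσ.1.2.2 hx
  obtain ⟨ε, hε_sum, hετ, hεσ⟩ := (hsum.and (hτ_angle.and hσ_angle)).exists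
  rw [← hετ, hε_sum]
  exact finsum_mem_congr rfl hεσ

theorem IsSubdivision.nSimplicesOn_eq_biUnion_subcells (hsub : IsSubdivision K L)
    (hdim : ∀ t ∈ K.faces, t.card ≤ n + 1) (hμ : μ ∈ K.faces) (hν : (openSimplex ν).Nonempty)
    (hcont : openSimplex ν ⊆ openSimplex μ) :
    nSimplicesOn n L ν = ⋃ τ ∈ nSimplicesOn n K μ, subcells n L ν τ := by
  refine subset_antisymm (fun σ hσ => ?_) (Set.iUnion₂_subset fun _ _ => Set.sep_subset _ _)
  obtain ⟨τ, hτ, hστ⟩ := hsub.2 σ hσ.1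
  have hσ_sub : σ ∈ subcells n L ν τ := ⟨hσ, hστ⟩
  have hhull := convexHull_subset_of_mem_subcells hσ_sub
  obtain ⟨x, hx⟩ := hν
  refine Set.mem_biUnion ⟨hτ, (hdim τ hτ).antisymm ?_, ?_⟩ hσ_sub
  · exact hσ.2.1.symm.le.trans (card_le_card_of_convexHull_subset (L.indep hσ.1) hhull)
  · exact subset_of_mem_openSimplex hμ hτ (hcont hx)
      (hhull (openSimplex_subset_convexHull_of_subset hσ.2.2 hx))

theorem pairwiseDisjoint_subcells : (K.faces).PairwiseDisjoint (subcells n L ν) := by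
  refine fun τ₁ h₁ τ₂ h₂ hne => Set.disjoint_left.2 fun σ hσ₁ hσ₂ => hne ?_
  have hc := centroid_mem_openSimplex (L.indep hσ₁.1.1)
    (SimplicialComplex.nonempty_of_mem_faces hσ₁.1.1)
  exact eq_of_mem_openSimplex h₁ h₂ (hσ₁.2 hc) (hσ₂.2 hc)

theorem IsSubdivision.finsum_solidAngle_eq (hK : K.faces.Finite) (hL : L.faces.Finite)
    (hdim : ∀ t ∈ K.faces, t.card ≤ n + 1) (hsub : IsSubdivision K L) (hν : ν ∈ L.faces)
    (hμ : μ ∈ K.faces) (hcont : openSimplex ν ⊆ openSimplex μ) :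
    ∑ᶠ σ ∈ nSimplicesOn n L ν, solidAngle ν σ = ∑ᶠ τ ∈ nSimplicesOn n K μ, solidAngle μ τ := by
  have hne : (openSimplex ν).Nonempty :=
    ⟨_, centroid_mem_openSimplex (L.indep hν) (SimplicialComplex.nonempty_of_mem_faces hν)⟩
  have hsubset : nSimplicesOn n K μ ⊆ K.faces := fun _ hτ => hτ.1
  rw [hsub.nSimplicesOn_eq_biUnion_subcells hdim hμ hne hcont,
    finsum_mem_biUnion (pairwiseDisjoint_subcells.subset hsubset) (hK.subset hsubset)
      fun _ _ => finite_subcells hL]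
  exact finsum_mem_congr rfl fun τ hτ =>
    (hsub.solidAngle_eq_finsum_subcells hL hν hcont hτ).symm

end AngleSum

/-- Subdivision preserves the stratification rank and the generalized angle
defect: if `L` is a subdivision of the finite `n`-dimensional complex `K` and
`ν` is an `i`-simplex of `L` whose open simplex is contained in the open
`r`-simplex `μ` of `K`, then `r_L(ν) = r_K(μ)` and `D_L(ν) = D_K(μ)`. -/
theorem rank_defect_subdivision {N n i r : ℕ}
    (K L : SimplicialComplex ℝ (Euc N))
    (hKfin : K.faces.Finite) (hLfin : L.faces.Finite) (hdim : IsNDim n K)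
    (hsub : IsSubdivision K L)
    (ν μ : Finset (Euc N)) (hν : ν ∈ L.faces) (hμ : μ ∈ K.faces)
    (hνcard : ν.card = i + 1) (hμcard : μ.card = r + 1)
    (hcont : openSimplex ν ⊆ openSimplex μ) :
    strRank n L ν = strRank n K μ ∧ defect n L ν = defect n K μ := by
  have hν_nonempty : (openSimplex ν).Nonempty :=
    ⟨_, centroid_mem_openSimplex (L.indep hν) (SimplicialComplex.nonempty_of_mem_faces hν)⟩
  have hrank : strRank n L ν = strRank n K μ :=
    strRank_eq_of_space_eq hKfin hsub.1 hμ hν_nonempty hcont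
  have hangles := hsub.finsum_solidAngle_eq hKfin hLfin hdim.1 hν hμ hcont
  exact ⟨hrank, by rw [defect, defect, hrank, hangles]⟩

end AngleDefectPaper
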